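/- arXiv:2205.07521 — 2 statements merged into one kernel-verified Lean document; each statement's English description precedes it below -/
import Mathlib

section
/- (Proposition 2.1, adjoint state gradient formula) Assume each trajectory z_i(t;θ) is C¹ jointly in (t,θ). For each i = 1,…,r let U_i : [0,1] → ℝ^d solve the adjoint equation dU_i(t)/dt + (∇v(z_i(t;θ),t;θ))ᵀ U_i(t) = [2(∇v)ᵀ v − λ ∇(∇·v)](z_i(t;θ),t;θ) with terminal condition U_i(1) = λ ∇ρ₁(z_i(1;θ))/ρ₁(z_i(1;θ)). Then the objective F̄ is differentiable in θ and ∂F̄(θ)/∂θ = (1/r) Σ_{i=1}^r ∫₀¹ [ (2 v(z_i(t;θ),t;θ) − U_i(t))ᵀ v_θ(z_i(t;θ),t;θ) − λ ∂_θ(∇·v)(z_i(t;θ),t;θ) ] dt + (α/(s P₀)) Σ_{j=1}^s ∫₀¹ 2 ⟨∇v_θ(y_j,t;θ), ∇v(y_j,t;θ)⟩ dt. -/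
/-- `(∇v)_{ij}(x,t;θ) = ∂_{x_j} v_i (x,t;θ)`: entries of the spatial Jacobian of a
parametric velocity field. -/
noncomputable def spaceJac {d p : ℕ} (v : (Fin d → ℝ) → ℝ → (Fin p → ℝ) → Fin d → ℝ)
    (x : Fin d → ℝ) (t : ℝ) (θ : Fin p → ℝ) (i j : Fin d) : ℝ :=
  fderiv ℝ (fun y => v y t θ) x (Pi.single j 1) i

/-- Spatial divergence `(∇·v)(x,t;θ) = ∑ i, ∂_{x_i} v_i (x,t;θ)`. -/
noncomputable def pdiv {d p : ℕ} (v : (Fin d → ℝ) → ℝ → (Fin p → ℝ) → Fin d → ℝ)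
    (x : Fin d → ℝ) (t : ℝ) (θ : Fin p → ℝ) : ℝ :=
  ∑ i, spaceJac v x t θ i i

/-- `(v_θ)_{ik}(x,t;θ) = ∂_{θ_k} v_i (x,t;θ)`: entries of the Jacobian of `v` with
respect to the parameters. -/
noncomputable def paramJac {d p : ℕ} (v : (Fin d → ℝ) → ℝ → (Fin p → ℝ) → Fin d → ℝ)
    (x : Fin d → ℝ) (t : ℝ) (θ : Fin p → ℝ) (i : Fin d) (k : Fin p) : ℝ :=
  fderiv ℝ (fun ϑ => v x t ϑ) θ (Pi.single k 1) i

/-- `(∇(∇·v))_l (x,t;θ) = ∂_{x_l} (∇·v)(x,t;θ)`: spatial gradient of the divergence. -/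
noncomputable def gradDiv {d p : ℕ} (v : (Fin d → ℝ) → ℝ → (Fin p → ℝ) → Fin d → ℝ)
    (x : Fin d → ℝ) (t : ℝ) (θ : Fin p → ℝ) (l : Fin d) : ℝ :=
  fderiv ℝ (fun y => pdiv v y t θ) x (Pi.single l 1)

/-- `∂_{θ_k} (∇·v)(x,t;θ)`: parameter derivative of the divergence. -/
noncomputable def paramDiv {d p : ℕ} (v : (Fin d → ℝ) → ℝ → (Fin p → ℝ) → Fin d → ℝ)
    (x : Fin d → ℝ) (t : ℝ) (θ : Fin p → ℝ) (k : Fin p) : ℝ :=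
  fderiv ℝ (fun ϑ => pdiv v x t ϑ) θ (Pi.single k 1)

/-- `∂_{θ_k} (∇v)_{ij}(x,t;θ)`: entries of `∇v_θ`, the parameter derivative of the
spatial Jacobian. -/
noncomputable def paramSpaceJac {d p : ℕ} (v : (Fin d → ℝ) → ℝ → (Fin p → ℝ) → Fin d → ℝ)
    (x : Fin d → ℝ) (t : ℝ) (θ : Fin p → ℝ) (i j : Fin d) (k : Fin p) : ℝ :=
  fderiv ℝ (fun ϑ => spaceJac v x t ϑ i j) θ (Pi.single k 1)

section Helpers

theorem par_fderiv {p : ℕ} {E : Type*} [NormedAddCommGroup E] [NormedSpace ℝ E]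
    (G : (Fin p → ℝ) → ℝ → E)
    (hG : ContDiff ℝ 1 fun q : (Fin p → ℝ) × ℝ => G q.1 q.2) (θ : Fin p → ℝ) (t : ℝ) :
    HasFDerivAt (fun ϑ => G ϑ t)
      ((fderiv ℝ (fun q : (Fin p → ℝ) × ℝ => G q.1 q.2) (θ, t)).comp
        (ContinuousLinearMap.inl ℝ (Fin p → ℝ) ℝ)) θ := by
  have h1 := (hG.differentiable one_ne_zero (θ, t)).hasFDerivAt
  exact HasFDerivAt.comp (f := fun ϑ : Fin p → ℝ => (ϑ, t)) θ h1 (hasFDerivAt_prodMk_left θ t)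

theorem par_fderiv_continuous {p : ℕ} {E : Type*} [NormedAddCommGroup E] [NormedSpace ℝ E]
    (G : (Fin p → ℝ) → ℝ → E)
    (hG : ContDiff ℝ 1 fun q : (Fin p → ℝ) × ℝ => G q.1 q.2) :
    Continuous fun q : (Fin p → ℝ) × ℝ => fderiv ℝ (fun ϑ => G ϑ q.2) q.1 := by
  have : (fun q : (Fin p → ℝ) × ℝ => fderiv ℝ (fun ϑ => G ϑ q.2) q.1) = fun q =>
      ((fderiv ℝ (fun q : (Fin p → ℝ) × ℝ => G q.1 q.2) q).comp
        (ContinuousLinearMap.inl ℝ (Fin p → ℝ) ℝ)) := by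
    funext q
    exact (par_fderiv G hG q.1 q.2).fderiv
  rw [this]
  exact (hG.continuous_fderiv one_ne_zero).clm_comp continuous_const

theorem par_int {p : ℕ} {E : Type*} [NormedAddCommGroup E] [NormedSpace ℝ E] [CompleteSpace E]
    (G : (Fin p → ℝ) → ℝ → E)
    (hG : ContDiff ℝ 1 fun q : (Fin p → ℝ) × ℝ => G q.1 q.2) (θ : Fin p → ℝ) (b : ℝ) :
    HasFDerivAt (fun ϑ => ∫ t in (0:ℝ)..b, G ϑ t)
      (∫ t in (0:ℝ)..b, fderiv ℝ (fun ϑ => G ϑ t) θ) θ := by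
  have hc := par_fderiv_continuous G hG
  have hK : IsCompact (Metric.closedBall θ 1 ×ˢ Set.uIcc (0:ℝ) b) :=
    (isCompact_closedBall θ 1).prod isCompact_uIcc
  obtain ⟨C, hC⟩ := hK.exists_bound_of_continuousOn hc.continuousOn
  have hGc : ∀ ϑ, Continuous fun t => G ϑ t := fun ϑ =>
    hG.continuous.comp (Continuous.prodMk_right ϑ)
  refine intervalIntegral.hasFDerivAt_integral_of_dominated_of_fderiv_le (𝕜 := ℝ)
    (F' := fun ϑ t => fderiv ℝ (fun ϑ => G ϑ t) ϑ) (bound := fun _ => C)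
    (Metric.closedBall_mem_nhds θ one_pos) ?_ ?_ ?_ ?_ ?_ ?_
  · exact Filter.Eventually.of_forall fun ϑ => (hGc ϑ).aestronglyMeasurable
  · exact (hGc θ).intervalIntegrable _ _
  · exact (hc.comp (Continuous.prodMk_right θ)).aestronglyMeasurable
  · exact Filter.Eventually.of_forall fun t ht ϑ hϑ =>
      hC (ϑ, t) ⟨hϑ, Set.uIoc_subset_uIcc ht⟩
  · exact intervalIntegrable_const
  · exact Filter.Eventually.of_forall fun t ht ϑ hϑ =>
      (par_fderiv G hG ϑ t).differentiableAt.hasFDerivAt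

theorem par_int_apply {p : ℕ} {E : Type*} [NormedAddCommGroup E] [NormedSpace ℝ E] [CompleteSpace E]
    (G : (Fin p → ℝ) → ℝ → E)
    (hG : ContDiff ℝ 1 fun q : (Fin p → ℝ) × ℝ => G q.1 q.2) (θ : Fin p → ℝ) (b : ℝ)
    (e : Fin p → ℝ) :
    (∫ t in (0:ℝ)..b, fderiv ℝ (fun ϑ => G ϑ t) θ) e =
      ∫ t in (0:ℝ)..b, fderiv ℝ (fun ϑ => G ϑ t) θ e := by
  refine ContinuousLinearMap.intervalIntegral_apply ?_ e
  exact ((par_fderiv_continuous G hG).comp (Continuous.prodMk_right θ)).intervalIntegrable _ _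

theorem par_apply_continuous {p : ℕ} {E : Type*} [NormedAddCommGroup E] [NormedSpace ℝ E]
    (G : (Fin p → ℝ) → ℝ → E)
    (hG : ContDiff ℝ 1 fun q : (Fin p → ℝ) × ℝ => G q.1 q.2) (θ e : Fin p → ℝ) :
    Continuous fun t => fderiv ℝ (fun ϑ => G ϑ t) θ e :=
  ((par_fderiv_continuous G hG).comp (Continuous.prodMk_right θ)).clm_apply continuous_const

/-- Chain rule along the characteristic. -/
theorem chain_rule {d p : ℕ} {E : Type*} [NormedAddCommGroup E] [NormedSpace ℝ E]
    (H : (Fin d → ℝ) → ℝ → (Fin p → ℝ) → E)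
    (hH : ContDiff ℝ 1 fun q : (Fin d → ℝ) × ℝ × (Fin p → ℝ) => H q.1 q.2.1 q.2.2)
    (ζ : (Fin p → ℝ) → Fin d → ℝ) (θ : Fin p → ℝ) (hζ : DifferentiableAt ℝ ζ θ) (t : ℝ)
    (e : Fin p → ℝ) :
    fderiv ℝ (fun ϑ => H (ζ ϑ) t ϑ) θ e =
      (∑ l, fderiv ℝ ζ θ e l • fderiv ℝ (fun y => H y t θ) (ζ θ) (Pi.single l 1))
        + fderiv ℝ (fun ϑ => H (ζ θ) t ϑ) θ e := by
  have h1 := (hH.differentiable one_ne_zero (ζ θ, t, θ)).hasFDerivAt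
  set D := fderiv ℝ (fun q : (Fin d → ℝ) × ℝ × (Fin p → ℝ) => H q.1 q.2.1 q.2.2) (ζ θ, t, θ)
  have a : HasFDerivAt (fun ϑ => H (ζ ϑ) t ϑ)
      (D.comp ((fderiv ℝ ζ θ).prod ((0 : (Fin p → ℝ) →L[ℝ] ℝ).prod
        (ContinuousLinearMap.id ℝ (Fin p → ℝ))))) θ :=
    HasFDerivAt.comp (f := fun ϑ => (ζ ϑ, t, ϑ)) θ h1
      (hζ.hasFDerivAt.prodMk ((hasFDerivAt_const t θ).prodMk (hasFDerivAt_id θ)))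
  have b : HasFDerivAt (fun ϑ => H (ζ θ) t ϑ)
      (D.comp ((0 : (Fin p → ℝ) →L[ℝ] (Fin d → ℝ)).prod ((0 : (Fin p → ℝ) →L[ℝ] ℝ).prod
        (ContinuousLinearMap.id ℝ (Fin p → ℝ))))) θ :=
    HasFDerivAt.comp (f := fun ϑ => (ζ θ, t, ϑ)) θ h1
      ((hasFDerivAt_const _ θ).prodMk ((hasFDerivAt_const t θ).prodMk (hasFDerivAt_id θ)))
  have c : HasFDerivAt (fun y => H y t θ)
      (D.comp ((ContinuousLinearMap.id ℝ (Fin d → ℝ)).prod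
        (0 : (Fin d → ℝ) →L[ℝ] ℝ × (Fin p → ℝ)))) (ζ θ) :=
    HasFDerivAt.comp (f := fun y => (y, t, θ)) (ζ θ) h1
      ((hasFDerivAt_id _).prodMk (hasFDerivAt_const (t, θ) _))
  have hsum : ∀ (L : (Fin d → ℝ) →L[ℝ] E) (w : Fin d → ℝ),
      (∑ l, w l • L (Pi.single l 1)) = L w := by
    intro L w
    conv_rhs => rw [pi_eq_sum_univ' w]
    simp [map_sum]
  rw [hsum, a.fderiv, b.fderiv, c.fderiv]
  simp only [ContinuousLinearMap.comp_apply, ContinuousLinearMap.prod_apply]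
  rw [← map_add]
  simp

theorem sum_single {d : ℕ} {E : Type*} [NormedAddCommGroup E] [NormedSpace ℝ E]
    (L : (Fin d → ℝ) →L[ℝ] E) (w : Fin d → ℝ) :
    (∑ l, w l • L (Pi.single l 1)) = L w := by
  conv_rhs => rw [pi_eq_sum_univ' w]
  simp [map_sum]


theorem spaceJac_contDiff {d p : ℕ} (v : (Fin d → ℝ) → ℝ → (Fin p → ℝ) → Fin d → ℝ)
    (hv : ContDiff ℝ 2 fun q : (Fin d → ℝ) × ℝ × (Fin p → ℝ) => v q.1 q.2.1 q.2.2) (i j : Fin d) :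
    ContDiff ℝ 1 fun q : (Fin d → ℝ) × ℝ × (Fin p → ℝ) => spaceJac v q.1 q.2.1 q.2.2 i j := by
  have : (fun q : (Fin d → ℝ) × ℝ × (Fin p → ℝ) => spaceJac v q.1 q.2.1 q.2.2 i j) = fun q =>
      fderiv ℝ (fun q : (Fin d → ℝ) × ℝ × (Fin p → ℝ) => v q.1 q.2.1 q.2.2) q
        (Pi.single j 1, 0) i := by
    funext q
    have h1 := (hv.differentiable two_ne_zero q).hasFDerivAt
    have c := HasFDerivAt.comp (f := fun y => (y, q.2)) q.1 h1
      ((hasFDerivAt_id _).prodMk (hasFDerivAt_const q.2 _))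
    unfold spaceJac
    have c' : fderiv ℝ (fun y => v y q.2.1 q.2.2) q.1 = _ := c.fderiv
    rw [c']
    simp
  rw [this]
  have h2 : ContDiff ℝ 1
      (fderiv ℝ (fun q : (Fin d → ℝ) × ℝ × (Fin p → ℝ) => v q.1 q.2.1 q.2.2)) :=
    hv.fderiv_right (by norm_num)
  exact contDiff_pi.1 (h2.clm_apply contDiff_const) i

theorem pdiv_contDiff {d p : ℕ} (v : (Fin d → ℝ) → ℝ → (Fin p → ℝ) → Fin d → ℝ)
    (hv : ContDiff ℝ 2 fun q : (Fin d → ℝ) × ℝ × (Fin p → ℝ) => v q.1 q.2.1 q.2.2) :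
    ContDiff ℝ 1 fun q : (Fin d → ℝ) × ℝ × (Fin p → ℝ) => pdiv v q.1 q.2.1 q.2.2 := by
  unfold pdiv
  exact ContDiff.sum fun i _ => spaceJac_contDiff v hv i i


theorem reg_term {d p : ℕ} (v : (Fin d → ℝ) → ℝ → (Fin p → ℝ) → Fin d → ℝ)
    (hv : ContDiff ℝ 2 fun q : (Fin d → ℝ) × ℝ × (Fin p → ℝ) => v q.1 q.2.1 q.2.2)
    (y : Fin d → ℝ) (θ : Fin p → ℝ) :
    ∃ D : (Fin p → ℝ) →L[ℝ] ℝ,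
      HasFDerivAt (fun ϑ => ∫ t in (0:ℝ)..1, ∑ l, ∑ m, (spaceJac v y t ϑ l m) ^ 2) D θ ∧
      ∀ k, D (Pi.single k 1) = ∫ t in (0:ℝ)..1,
              2 * ∑ l, ∑ m, paramSpaceJac v y t θ l m k * spaceJac v y t θ l m := by
  have hJ : ∀ l m, ContDiff ℝ 1 fun q : (Fin p → ℝ) × ℝ => spaceJac v y q.2 q.1 l m :=
    fun l m => (spaceJac_contDiff v hv l m).comp
      (contDiff_const.prodMk (contDiff_snd.prodMk contDiff_fst))
  have hG : ContDiff ℝ 1 fun q : (Fin p → ℝ) × ℝ =>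
      (fun ϑ t => ∑ l, ∑ m, (spaceJac v y t ϑ l m) ^ 2) q.1 q.2 :=
    ContDiff.sum fun l _ => ContDiff.sum fun m _ => (hJ l m).pow 2
  refine ⟨_, par_int (fun ϑ t => ∑ l, ∑ m, (spaceJac v y t ϑ l m) ^ 2) hG θ 1, fun k => ?_⟩
  rw [par_int_apply (fun ϑ t => ∑ l, ∑ m, (spaceJac v y t ϑ l m) ^ 2) hG]
  congr 1
  funext t
  have hd : HasFDerivAt (fun ϑ => ∑ l, ∑ m, (spaceJac v y t ϑ l m) ^ 2) _ θ :=
    HasFDerivAt.fun_sum fun l _ => HasFDerivAt.fun_sum fun m _ =>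
      ((par_fderiv (fun ϑ t => spaceJac v y t ϑ l m) (hJ l m)
        θ t).differentiableAt.hasFDerivAt.pow 2)
  rw [hd.fderiv]
  simp only [_root_.sum_apply, Finset.mul_sum, paramSpaceJac]
  refine Finset.sum_congr rfl fun l _ => Finset.sum_congr rfl fun m _ => ?_
  simp
  ring

theorem particle_term {d p : ℕ} (v : (Fin d → ℝ) → ℝ → (Fin p → ℝ) → Fin d → ℝ)
    (hv : ContDiff ℝ 2 fun q : (Fin d → ℝ) × ℝ × (Fin p → ℝ) => v q.1 q.2.1 q.2.2)
    (c : ℝ) (hc : 0 < c) (ρ₁ : (Fin d → ℝ) → ℝ)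
    (hρ₁_pos : ∀ x, 0 < ρ₁ x) (hρ₁ : ContDiff ℝ 1 ρ₁)
    (x : Fin d → ℝ) (lam : ℝ)
    (z : (Fin p → ℝ) → ℝ → Fin d → ℝ)
    (hzC1 : ContDiff ℝ 1 fun q : (Fin p → ℝ) × ℝ => z q.1 q.2)
    (hz0 : ∀ ϑ, z ϑ 0 = x)
    (hzode : ∀ (ϑ : Fin p → ℝ) (t : ℝ), HasDerivAt (fun τ => z ϑ τ) (v (z ϑ t) t ϑ) t)
    (θ : Fin p → ℝ)
    (U : ℝ → Fin d → ℝ)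
    (hUode : ∀ t ∈ Set.Icc (0:ℝ) 1, ∀ l : Fin d,
        HasDerivAt (fun τ => U τ l)
          (-(∑ m, spaceJac v (z θ t) t θ m l * U t m)
            + 2 * (∑ m, spaceJac v (z θ t) t θ m l * v (z θ t) t θ m)
            - lam * gradDiv v (z θ t) t θ l) t)
    (hU1 : ∀ (l : Fin d),
        U 1 l = lam * fderiv ℝ ρ₁ (z θ 1) (Pi.single l 1) / ρ₁ (z θ 1)) :
    ∃ D₁ D₂ : (Fin p → ℝ) →L[ℝ] ℝ,
      HasFDerivAt (fun ϑ => ∫ t in (0:ℝ)..1, ∑ l, (v (z ϑ t) t ϑ l) ^ 2) D₁ θ ∧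
      HasFDerivAt (fun ϑ => Real.log
                ((c * Real.exp (-(∫ t in (0:ℝ)..1, pdiv v (z ϑ t) t ϑ)))
                  / ρ₁ (z ϑ 1))) D₂ θ ∧
      ∀ k, D₁ (Pi.single k 1) + lam * D₂ (Pi.single k 1) = ∫ t in (0:ℝ)..1,
              (∑ l, (2 * v (z θ t) t θ l - U t l) * paramJac v (z θ t) t θ l k)
                - lam * paramDiv v (z θ t) t θ k := by
  have hv1 : ContDiff ℝ 1 fun q : (Fin d → ℝ) × ℝ × (Fin p → ℝ) => v q.1 q.2.1 q.2.2 :=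
    hv.of_le (by norm_num)
  have hflow : ContDiff ℝ 1 fun q : (Fin p → ℝ) × ℝ => (z q.1 q.2, q.2, q.1) :=
    hzC1.prodMk (contDiff_snd.prodMk contDiff_fst)
  have hVz : ContDiff ℝ 1 fun q : (Fin p → ℝ) × ℝ => (fun ϑ t => v (z ϑ t) t ϑ) q.1 q.2 :=
    hv1.comp hflow
  have hDz : ContDiff ℝ 1 fun q : (Fin p → ℝ) × ℝ => (fun ϑ t => pdiv v (z ϑ t) t ϑ) q.1 q.2 :=
    (pdiv_contDiff v hv).comp hflow
  have hVz2 : ContDiff ℝ 1 fun q : (Fin p → ℝ) × ℝ =>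
      (fun ϑ t => ∑ l, (v (z ϑ t) t ϑ l) ^ 2) q.1 q.2 :=
    ContDiff.sum fun l _ => (contDiff_pi.1 hVz l).pow 2
  have hzd : ∀ t, DifferentiableAt ℝ (fun ϑ => z ϑ t) θ := fun t =>
    (par_fderiv z hzC1 θ t).differentiableAt
  -- the log term
  have hlog : (fun ϑ => Real.log
                ((c * Real.exp (-(∫ t in (0:ℝ)..1, pdiv v (z ϑ t) t ϑ)))
                  / ρ₁ (z ϑ 1))) = fun ϑ => Real.log c -
                  (∫ t in (0:ℝ)..1, pdiv v (z ϑ t) t ϑ) - Real.log (ρ₁ (z ϑ 1)) := by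
    funext ϑ
    rw [Real.log_div (mul_pos hc (Real.exp_pos _)).ne' (hρ₁_pos _).ne',
      Real.log_mul hc.ne' (Real.exp_pos _).ne', Real.log_exp]
    ring
  have hρz : HasFDerivAt (fun ϑ => ρ₁ (z ϑ 1))
      ((fderiv ℝ ρ₁ (z θ 1)).comp (fderiv ℝ (fun ϑ => z ϑ 1) θ)) θ :=
    HasFDerivAt.comp (f := fun ϑ => z ϑ 1) θ
      (hρ₁.differentiable one_ne_zero _).hasFDerivAt (hzd 1).hasFDerivAt
  have hD2 := ((par_int (fun ϑ t => pdiv v (z ϑ t) t ϑ) hDz θ 1).const_sub (Real.log c)).sub (hρz.log (hρ₁_pos _).ne')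
  refine ⟨_, _, par_int (fun ϑ t => ∑ l, (v (z ϑ t) t ϑ l) ^ 2) hVz2 θ 1, by rw [hlog]; exact hD2, fun k => ?_⟩
  set e : Fin p → ℝ := Pi.single k 1 with he
  -- the sensitivity
  set w : ℝ → Fin d → ℝ := fun t => fderiv ℝ (fun ϑ => z ϑ t) θ e with hw
  have hwint : ∀ b, w b = ∫ t in (0:ℝ)..b, fderiv ℝ (fun ϑ => v (z ϑ t) t ϑ) θ e := by
    intro b
    have h1 : (fun ϑ => z ϑ b) = fun ϑ => x + ∫ t in (0:ℝ)..b, v (z ϑ t) t ϑ := by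
      funext ϑ
      rw [intervalIntegral.integral_eq_sub_of_hasDerivAt (fun t _ => hzode ϑ t)
        ((hVz.continuous.comp (Continuous.prodMk_right ϑ)).intervalIntegrable _ _), hz0]
      abel
    have h2 := (par_int (fun ϑ t => v (z ϑ t) t ϑ) hVz θ b).const_add x
    simp only [hw]
    rw [h1, h2.fderiv, par_int_apply (fun ϑ t => v (z ϑ t) t ϑ) hVz]
  have hwc : Continuous fun t => fderiv ℝ (fun ϑ => v (z ϑ t) t ϑ) θ e :=
    par_apply_continuous (fun ϑ t => v (z ϑ t) t ϑ) hVz θ e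
  have hwd : ∀ t, HasDerivAt w (fderiv ℝ (fun ϑ => v (z ϑ t) t ϑ) θ e) t := by
    intro t
    have : w = fun b => ∫ t in (0:ℝ)..b, fderiv ℝ (fun ϑ => v (z ϑ t) t ϑ) θ e := funext hwint
    rw [this]
    exact intervalIntegral.integral_hasDerivAt_right (hwc.intervalIntegrable _ _)
      (hwc.stronglyMeasurableAtFilter _ _) hwc.continuousAt
  have hwchain : ∀ t l, fderiv ℝ (fun ϑ => v (z ϑ t) t ϑ) θ e l =
      (∑ m, w t m * spaceJac v (z θ t) t θ l m) + paramJac v (z θ t) t θ l k := by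
    intro t l
    rw [chain_rule v hv1 (fun ϑ => z ϑ t) θ (hzd t) t e]
    simp [spaceJac, paramJac, hw, he]
  have hdchain : ∀ t, fderiv ℝ (fun ϑ => pdiv v (z ϑ t) t ϑ) θ e =
      (∑ m, w t m * gradDiv v (z θ t) t θ m) + paramDiv v (z θ t) t θ k := by
    intro t
    rw [chain_rule (pdiv v) (pdiv_contDiff v hv) (fun ϑ => z ϑ t) θ (hzd t) t e]
    simp [gradDiv, paramDiv, hw, he]
  have hsq : ∀ t, fderiv ℝ (fun ϑ => ∑ l, (v (z ϑ t) t ϑ l) ^ 2) θ e =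
      ∑ l, 2 * v (z θ t) t θ l * fderiv ℝ (fun ϑ => v (z ϑ t) t ϑ) θ e l := by
    intro t
    have h0 := (par_fderiv (fun ϑ t => v (z ϑ t) t ϑ) hVz θ t).differentiableAt.hasFDerivAt
    have hd : HasFDerivAt (fun ϑ => ∑ l, (v (z ϑ t) t ϑ l) ^ 2) _ θ :=
      HasFDerivAt.fun_sum fun l _ => ((hasFDerivAt_pi'.1 h0 l).pow 2)
    rw [hd.fderiv]
    simp only [_root_.sum_apply]
    refine Finset.sum_congr rfl fun l _ => ?_
    simp
  have hw0 : w 0 = 0 := by rw [hwint]; simp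
  -- the duality identity
  have hUw : ∀ t ∈ Set.Icc (0:ℝ) 1, HasDerivAt (fun τ => ∑ l, U τ l * w τ l)
      (fderiv ℝ (fun ϑ => ∑ l, (v (z ϑ t) t ϑ l) ^ 2) θ e
        - lam * fderiv ℝ (fun ϑ => pdiv v (z ϑ t) t ϑ) θ e
        - ((∑ l, (2 * v (z θ t) t θ l - U t l) * paramJac v (z θ t) t θ l k)
                - lam * paramDiv v (z θ t) t θ k)) t := by
    intro t ht
    have h1 : HasDerivAt (fun τ => ∑ l, U τ l * w τ l) _ t :=
      HasDerivAt.fun_sum fun l _ => (hUode t ht l).mul (hasDerivAt_pi.1 (hwd t) l)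
    convert h1 using 1
    rw [hsq, hdchain]
    simp only [hwchain]
    have s1 : ∀ f : Fin d → ℝ, ∑ l, (∑ m, spaceJac v (z θ t) t θ m l * f m) * w t l
        = ∑ l, f l * ∑ m, w t m * spaceJac v (z θ t) t θ l m := by
      intro f
      simp only [Finset.sum_mul, Finset.mul_sum]
      rw [Finset.sum_comm]
      exact Finset.sum_congr rfl fun l _ => Finset.sum_congr rfl fun m _ => by ring
    have s2 := s1 (U t)
    have s3 := s1 (v (z θ t) t θ)
    set J := fun l => ∑ m, w t m * spaceJac v (z θ t) t θ l m
    set A := fun l => ∑ m, spaceJac v (z θ t) t θ m l * U t m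
    set B := fun l => ∑ m, spaceJac v (z θ t) t θ m l * v (z θ t) t θ m
    change ∑ l, A l * w t l = ∑ l, U t l * J l at s2
    change ∑ l, B l * w t l = ∑ l, v (z θ t) t θ l * J l at s3
    change ∑ l, 2 * v (z θ t) t θ l * (J l + paramJac v (z θ t) t θ l k)
      - lam * (∑ m, w t m * gradDiv v (z θ t) t θ m + paramDiv v (z θ t) t θ k)
      - (∑ l, (2 * v (z θ t) t θ l - U t l) * paramJac v (z θ t) t θ l k
        - lam * paramDiv v (z θ t) t θ k)
      = ∑ l, ((-A l + 2 * B l - lam * gradDiv v (z θ t) t θ l) * w t l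
        + U t l * (J l + paramJac v (z θ t) t θ l k))
    have e1 : ∑ l, ((-A l + 2 * B l - lam * gradDiv v (z θ t) t θ l) * w t l
        + U t l * (J l + paramJac v (z θ t) t θ l k))
        = - ∑ l, A l * w t l + 2 * ∑ l, B l * w t l
          - lam * ∑ m, w t m * gradDiv v (z θ t) t θ m + ∑ l, U t l * J l
          + ∑ l, U t l * paramJac v (z θ t) t θ l k := by
      simp only [Finset.mul_sum, ← Finset.sum_neg_distrib, ← Finset.sum_add_distrib,
        ← Finset.sum_sub_distrib]
      exact Finset.sum_congr rfl fun l _ => by ring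
    have e2 : ∑ l, 2 * v (z θ t) t θ l * (J l + paramJac v (z θ t) t θ l k)
        = 2 * ∑ l, v (z θ t) t θ l * J l
          + ∑ l, 2 * v (z θ t) t θ l * paramJac v (z θ t) t θ l k := by
      simp only [Finset.mul_sum, ← Finset.sum_add_distrib]
      exact Finset.sum_congr rfl fun l _ => by ring
    have e3 : ∑ l, (2 * v (z θ t) t θ l - U t l) * paramJac v (z θ t) t θ l k
        = ∑ l, 2 * v (z θ t) t θ l * paramJac v (z θ t) t θ l k
          - ∑ l, U t l * paramJac v (z θ t) t θ l k := by
      simp only [← Finset.sum_sub_distrib]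
      exact Finset.sum_congr rfl fun l _ => by ring
    rw [e1, e2, e3, s2, s3]
    ring
  -- continuity facts
  have hc1 : Continuous fun t => fderiv ℝ (fun ϑ => ∑ l, (v (z ϑ t) t ϑ l) ^ 2) θ e :=
    par_apply_continuous (fun ϑ t => ∑ l, (v (z ϑ t) t ϑ l) ^ 2) hVz2 θ e
  have hc2 : Continuous fun t => fderiv ℝ (fun ϑ => pdiv v (z ϑ t) t ϑ) θ e :=
    par_apply_continuous (fun ϑ t => pdiv v (z ϑ t) t ϑ) hDz θ e
  have hwcont : Continuous w := par_apply_continuous z hzC1 θ e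
  have hflowθ : Continuous fun t : ℝ => (z θ t, t, θ) :=
    hflow.continuous.comp (Continuous.prodMk_right θ)
  have hc3 : ∀ l, Continuous fun t => paramJac v (z θ t) t θ l k := by
    intro l
    have : (fun t => paramJac v (z θ t) t θ l k) = fun t =>
      fderiv ℝ (fun ϑ => v (z ϑ t) t ϑ) θ e l - ∑ m, w t m * spaceJac v (z θ t) t θ l m := by
      funext t; rw [hwchain]; ring
    rw [this]
    refine ((continuous_apply l).comp hwc).sub (continuous_finsetSum _ fun m _ => ?_)
    exact ((continuous_apply m).comp hwcont).mul
      ((spaceJac_contDiff v hv l m).continuous.comp hflowθ)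
  have hc4 : Continuous fun t => paramDiv v (z θ t) t θ k := by
    have h1 : ContDiff ℝ 1 fun q : (Fin p → ℝ) × ℝ =>
        (fun ϑ t => pdiv v (z θ t) t ϑ) q.1 q.2 :=
      (pdiv_contDiff v hv).comp
        (((hzC1.comp (contDiff_const.prodMk contDiff_id)).comp contDiff_snd).prodMk
          (contDiff_snd.prodMk contDiff_fst))
    exact par_apply_continuous (fun ϑ t => pdiv v (z θ t) t ϑ) h1 θ e
  have hUc : ∀ l, ContinuousOn (fun t => U t l) (Set.uIcc (0:ℝ) 1) := by
    intro l t ht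
    rw [Set.uIcc_of_le zero_le_one] at ht
    exact (hUode t ht l).continuousAt.continuousWithinAt
  have hvc : ∀ l, Continuous fun t => v (z θ t) t θ l := fun l =>
    (continuous_apply l).comp (hv.continuous.comp hflowθ)
  have hint : IntervalIntegrable (fun t =>
      (∑ l, (2 * v (z θ t) t θ l - U t l) * paramJac v (z θ t) t θ l k)
                - lam * paramDiv v (z θ t) t θ k) MeasureTheory.volume 0 1 := by
    apply ContinuousOn.intervalIntegrable
    refine ContinuousOn.sub (continuousOn_finsetSum _ fun l _ => ?_)
      (continuous_const.mul hc4).continuousOn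
    exact ((continuous_const.mul (hvc l)).continuousOn.sub (hUc l)).mul (hc3 l).continuousOn
  have hi1 : IntervalIntegrable _ MeasureTheory.volume 0 1 := hc1.intervalIntegrable 0 1
  have hi2 : IntervalIntegrable (fun t => lam * fderiv ℝ (fun ϑ => pdiv v (z ϑ t) t ϑ) θ e)
      MeasureTheory.volume 0 1 := (hc2.intervalIntegrable 0 1).const_mul lam
  have key := intervalIntegral.integral_eq_sub_of_hasDerivAt
    (fun t ht => hUw t (by rwa [Set.uIcc_of_le zero_le_one] at ht)) ((hi1.sub hi2).sub hint)
  rw [intervalIntegral.integral_sub (hi1.sub hi2) hint, intervalIntegral.integral_sub hi1 hi2,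
    intervalIntegral.integral_const_mul] at key
  have hend : ∑ l, U 1 l * w 1 l = lam * ((ρ₁ (z θ 1))⁻¹ * fderiv ℝ ρ₁ (z θ 1) (w 1)) := by
    rw [← sum_single (fderiv ℝ ρ₁ (z θ 1)) (w 1)]
    simp only [Finset.mul_sum, hU1, smul_eq_mul]
    exact Finset.sum_congr rfl fun l _ => by ring
  simp only [hw0, hend] at key
  rw [par_int_apply (fun ϑ t => ∑ l, (v (z ϑ t) t ϑ l) ^ 2) hVz2]
  simp only [ContinuousLinearMap.sub_apply, ContinuousLinearMap.neg_apply,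
    ContinuousLinearMap.smul_apply, ContinuousLinearMap.comp_apply, smul_eq_mul]
  rw [par_int_apply (fun ϑ t => pdiv v (z ϑ t) t ϑ) hDz]
  simp only [Pi.zero_apply, mul_zero, Finset.sum_const_zero, hw] at key
  linarith

end Helpers

/- STATEMENT 0 (Proposition 2.1): adjoint state gradient formula for the
semi-discrete dynamic-OT objective
`F̄(θ) = (1/r) ∑ᵢ ∫₀¹ |v(zᵢ(t;θ),t;θ)|² dt
        + (α/(s P₀)) ∑ⱼ ∫₀¹ |∇v(yⱼ,t;θ)|_F² dt
        + (λ/r) ∑ᵢ log( ρ(zᵢ(1;θ),1) / ρ₁(zᵢ(1;θ)) )`,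
where `ρ(zᵢ(1;θ),1) = ρ₀(xᵢ) exp(-∫₀¹ (∇·v)(zᵢ(t;θ),t;θ) dt)` is the transported
density. If each `Uᵢ` solves the adjoint equation
`dUᵢ/dt + (∇v)ᵀ Uᵢ = 2 (∇v)ᵀ v − λ ∇(∇·v)` along `zᵢ` with terminal condition
`Uᵢ(1) = λ ∇ρ₁(zᵢ(1))/ρ₁(zᵢ(1))`, then `F̄` is differentiable at `θ` and
`∂F̄/∂θ = (1/r) ∑ᵢ ∫₀¹ [(2v − Uᵢ)ᵀ v_θ − λ ∂_θ(∇·v)] dt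
         + (α/(s P₀)) ∑ⱼ ∫₀¹ 2 ⟨∇v_θ, ∇v⟩ dt` (stated componentwise). -/
theorem adjoint_state_gradient_formula {d p r s : ℕ}
    (hr : 0 < r) (hs : 0 < s)
    (v : (Fin d → ℝ) → ℝ → (Fin p → ℝ) → Fin d → ℝ)
    (hv : ContDiff ℝ 2 fun q : (Fin d → ℝ) × ℝ × (Fin p → ℝ) => v q.1 q.2.1 q.2.2)
    (ρ₀ ρ₁ : (Fin d → ℝ) → ℝ)
    (hρ₀_pos : ∀ x, 0 < ρ₀ x) (hρ₁_pos : ∀ x, 0 < ρ₁ x) (hρ₁ : ContDiff ℝ 1 ρ₁)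
    (x : Fin r → Fin d → ℝ) (y : Fin s → Fin d → ℝ)
    (lam α P₀ : ℝ) (hlam : 0 < lam) (hα : 0 < α) (hP₀ : 0 < P₀)
    -- the characteristics `z i θ t`, C¹ jointly in (t, θ)
    (z : Fin r → (Fin p → ℝ) → ℝ → Fin d → ℝ)
    (hzC1 : ∀ i, ContDiff ℝ 1 fun q : (Fin p → ℝ) × ℝ => z i q.1 q.2)
    (hz0 : ∀ i ϑ, z i ϑ 0 = x i)
    (hzode : ∀ (i : Fin r) (ϑ : Fin p → ℝ) (t : ℝ),
        HasDerivAt (fun τ => z i ϑ τ) (v (z i ϑ t) t ϑ) t)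
    (θ : Fin p → ℝ)
    -- the adjoint states `U i`, solving the adjoint ODE with its terminal condition
    (U : Fin r → ℝ → Fin d → ℝ)
    (hUode : ∀ i : Fin r, ∀ t ∈ Set.Icc (0:ℝ) 1, ∀ l : Fin d,
        HasDerivAt (fun τ => U i τ l)
          (-(∑ m, spaceJac v (z i θ t) t θ m l * U i t m)
            + 2 * (∑ m, spaceJac v (z i θ t) t θ m l * v (z i θ t) t θ m)
            - lam * gradDiv v (z i θ t) t θ l) t)
    (hU1 : ∀ (i : Fin r) (l : Fin d),
        U i 1 l = lam * fderiv ℝ ρ₁ (z i θ 1) (Pi.single l 1) / ρ₁ (z i θ 1))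
    -- the semi-discrete objective
    (F : (Fin p → ℝ) → ℝ)
    (hF : F = fun ϑ =>
        (1 / (r : ℝ)) * (∑ i, ∫ t in (0:ℝ)..1, ∑ l, (v (z i ϑ t) t ϑ l) ^ 2)
          + (α / ((s : ℝ) * P₀)) *
              (∑ j, ∫ t in (0:ℝ)..1, ∑ l, ∑ m, (spaceJac v (y j) t ϑ l m) ^ 2)
          + (lam / (r : ℝ)) *
              (∑ i, Real.log
                ((ρ₀ (x i) * Real.exp (-(∫ t in (0:ℝ)..1, pdiv v (z i ϑ t) t ϑ)))
                  / ρ₁ (z i ϑ 1)))) :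
    DifferentiableAt ℝ F θ ∧
    ∀ k : Fin p,
      fderiv ℝ F θ (Pi.single k 1)
        = (1 / (r : ℝ)) * (∑ i, ∫ t in (0:ℝ)..1,
              (∑ l, (2 * v (z i θ t) t θ l - U i t l) * paramJac v (z i θ t) t θ l k)
                - lam * paramDiv v (z i θ t) t θ k)
          + (α / ((s : ℝ) * P₀)) * (∑ j, ∫ t in (0:ℝ)..1,
              2 * ∑ l, ∑ m,
                paramSpaceJac v (y j) t θ l m k * spaceJac v (y j) t θ l m) := by
  choose D₁ D₂ h1 h2 h3 using fun i => particle_term v hv (ρ₀ (x i)) (hρ₀_pos _) ρ₁ hρ₁_pos hρ₁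
    (x i) lam (z i) (hzC1 i) (hz0 i) (hzode i) θ (U i) (hUode i) (hU1 i)
  choose R hR1 hR2 using fun j => reg_term v hv (y j) θ
  have a1 := HasFDerivAt.fun_sum (u := Finset.univ) fun i _ => h1 i
  have a2 := HasFDerivAt.fun_sum (u := Finset.univ) fun j _ => hR1 j
  have a3 := HasFDerivAt.fun_sum (u := Finset.univ) fun i _ => h2 i
  have hD := ((a1.const_mul (1 / (r : ℝ))).add (a2.const_mul (α / ((s : ℝ) * P₀)))).add
    (a3.const_mul (lam / (r : ℝ)))
  subst hF
  refine ⟨hD.differentiableAt, fun k => ?_⟩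
  refine (congrArg (fun L : (Fin p → ℝ) →L[ℝ] ℝ => L (Pi.single k 1)) hD.fderiv).trans ?_
  simp only [← h3, ← hR2, ContinuousLinearMap.add_apply, ContinuousLinearMap.smul_apply,
    _root_.sum_apply, smul_eq_mul, Finset.sum_add_distrib, ← Finset.mul_sum]
  ring
end

section
/- (The pushforward along the flow solves the continuity equation weakly) Let v : ℝ^d × [0,1] → ℝ^d be continuous and let z : ℝ^d × [0,1] → ℝ^d be continuous, differentiable in t, and satisfy ∂_t z(x,t) = v(z(x,t),t) with z(x,0) = x. Let μ₀ be a finite Borel measure on ℝ^d and set μ_t := (z(·,t))_# μ₀, the pushforward of μ₀ under x ↦ z(x,t). Then for every compactly supported C¹ function φ : ℝ^d → ℝ, the map t ↦ ∫ φ dμ_t is differentiable on [0,1] with (d/dt) ∫_{ℝ^d} φ dμ_t = ∫_{ℝ^d} ⟨∇φ(y), v(y,t)⟩ dμ_t(y); that is, μ_t is a weak solution of ∂_t ρ + ∇·(ρ v) = 0 with initial datum μ₀. -/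
open MeasureTheory

/- STATEMENT 10: The pushforward along the flow solves the continuity equation weakly.
With `∂ₜ z(x,t) = v(z(x,t),t)`, `z(x,0) = x`, `μ_t = (z(·,t))_# μ₀`, for every
compactly supported C¹ test function `φ`,
`(d/dt) ∫ φ dμ_t = ∫ ⟨∇φ(y), v(y,t)⟩ dμ_t(y)` (the pairing `⟨∇φ(y), w⟩` being the
differential `fderiv ℝ φ y w`). -/
theorem pushforward_solves_continuity_equation_weakly {d : ℕ}
    (v : (Fin d → ℝ) → ℝ → Fin d → ℝ)
    (hv : Continuous fun q : (Fin d → ℝ) × ℝ => v q.1 q.2)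
    (z : (Fin d → ℝ) → ℝ → Fin d → ℝ)
    (hz_cont : Continuous fun q : (Fin d → ℝ) × ℝ => z q.1 q.2)
    (hzode : ∀ (x : Fin d → ℝ) (t : ℝ), HasDerivAt (fun s => z x s) (v (z x t) t) t)
    (hz0 : ∀ x, z x 0 = x)
    (μ₀ : Measure (Fin d → ℝ)) [IsFiniteMeasure μ₀]
    (φ : (Fin d → ℝ) → ℝ) (hφ_supp : HasCompactSupport φ) (hφ : ContDiff ℝ 1 φ) :
    ∀ t ∈ Set.Icc (0:ℝ) 1,
      HasDerivAt (fun s => ∫ y, φ y ∂(Measure.map (fun x => z x s) μ₀))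
        (∫ y, fderiv ℝ φ y (v y t) ∂(Measure.map (fun x => z x t) μ₀)) t := by
  intro t _
  have hdφ : Continuous (fderiv ℝ φ) := hφ.continuous_fderiv one_ne_zero
  have hzs : ∀ s, Continuous fun x => z x s := fun s =>
    hz_cont.comp (continuous_id.prodMk continuous_const)
  have hvs : ∀ s, Continuous fun y => v y s := fun s =>
    hv.comp (continuous_id.prodMk continuous_const)
  have hG : Continuous fun q : (Fin d → ℝ) × ℝ => fderiv ℝ φ q.1 (v q.1 q.2) :=
    (hdφ.comp continuous_fst).clm_apply hv
  have hGs : ∀ s, Continuous fun y => fderiv ℝ φ y (v y s) := fun s =>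
    hdφ.clm_apply (hvs s)
  -- change of variables for the pushforward
  have e1 : (fun s => ∫ y, φ y ∂(Measure.map (fun x => z x s) μ₀)) =
      fun s => ∫ x, φ (z x s) ∂μ₀ := by
    funext s
    exact integral_map (hzs s).aemeasurable hφ.continuous.aestronglyMeasurable
  have e2 : ∫ y, fderiv ℝ φ y (v y t) ∂(Measure.map (fun x => z x t) μ₀) =
      ∫ x, fderiv ℝ φ (z x t) (v (z x t) t) ∂μ₀ :=
    integral_map (hzs t).aemeasurable (hGs t).aestronglyMeasurable
  rw [e1, e2]
  -- uniform bound
  obtain ⟨C, hC⟩ := (hφ_supp.isCompact.prod (isCompact_closedBall t 1)).exists_bound_of_continuousOn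
    hG.continuousOn
  obtain ⟨M, hM⟩ := hφ.continuous.bounded_above_of_compact_support hφ_supp
  have hbound : ∀ y, ∀ s ∈ Metric.closedBall t 1, ‖fderiv ℝ φ y (v y s)‖ ≤ max C 0 := by
    intro y s hs
    by_cases hy : y ∈ tsupport φ
    · exact (hC (y, s) ⟨hy, hs⟩).trans (le_max_left _ _)
    · have : fderiv ℝ φ y = 0 := by
        by_contra h
        exact hy (support_fderiv_subset ℝ h)
      simp [this]
  refine (hasDerivAt_integral_of_dominated_loc_of_deriv_le (μ := μ₀)
    (F := fun s x => φ (z x s)) (F' := fun s x => fderiv ℝ φ (z x s) (v (z x s) s))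
    (bound := fun _ => max C 0) (Metric.closedBall_mem_nhds t one_pos) ?_ ?_ ?_ ?_ ?_ ?_).2
  · exact Filter.Eventually.of_forall fun s =>
      (hφ.continuous.comp (hzs s)).aestronglyMeasurable
  · exact Integrable.of_bound (hφ.continuous.comp (hzs t)).aestronglyMeasurable M
      (Filter.Eventually.of_forall fun x => hM _)
  · exact ((hGs t).comp (hzs t)).aestronglyMeasurable
  · exact Filter.Eventually.of_forall fun x s hs => hbound _ s hs
  · exact integrable_const _
  · exact Filter.Eventually.of_forall fun x s _ =>
      ((hφ.differentiable one_ne_zero (z x s)).hasFDerivAt).comp_hasDerivAt s (hzode x s)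
end
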